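/- Let l ≠ 0 be real and let a, b, c, d be real-valued differentiable functions on an interval J solving the system (Q): a' = −a² − bc + lc, b' = −(a+d)b + ld, c' = −(a+d)c − la, d' = −d² − bc − lb. Set δ := a·d − (b − l)(c + l) and suppose δ(t) ≠ 0 on J. Then the function V₁ := [a² + d² + (b − l + δ/l)² + (c + l − δ/l)²] / δ² is constant along the solution. -/

import Mathlib

/-!
In matrix form the system (Q) is the Riccati equation `Q' = -Q² - A Q`, where `A = l L` is
invertible and skew-symmetric. The inverse `N = (Q + A)⁻¹` solves the affine equation
`N' = 1 - A N`, whose equilibrium is `A⁻¹`, so `W = N - A⁻¹` solves the linear equation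
`W' = -A W`. Since `A` is skew-symmetric, this flow is orthogonal and preserves the Gram matrix
`Wᵀ W`. The determinant of `Q + A` is `δ`, and the trace of `Wᵀ W` is `V₁`.
-/

open scoped Ring

/-- The coordinate `(Q + A)⁻¹ - A⁻¹` that linearizes the Riccati equation `Q' = -Q² - A Q` and
vanishes at its equilibrium `Q = 0`. Inverses are `Ring.inverse`, which is `0` at non-units. -/
noncomputable def riccatiCoord {R : Type*} [Ring R] (A Q : R) : R :=
  (Q + A)⁻¹ʳ - A⁻¹ʳ

section Riccati

variable {𝕜 R : Type*} [NontriviallyNormedField 𝕜] [NormedRing R] [NormedAlgebra 𝕜 R]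
  {s : Set 𝕜} {t : 𝕜}

theorem hasDerivWithinAt_ringInverse [HasSummableGeomSeries R] {M : 𝕜 → R} {M' : R}
    (hM : HasDerivWithinAt M M' s t) (hunit : IsUnit (M t)) :
    HasDerivWithinAt (fun x => (M x)⁻¹ʳ) (-((M t)⁻¹ʳ * M' * (M t)⁻¹ʳ)) s t := by
  obtain ⟨u, hu⟩ := hunit
  have hinv := hasFDerivAt_ringInverse (𝕜 := 𝕜) u
  rw [hu] at hinv
  refine (hinv.comp_hasDerivWithinAt t hM).congr_deriv ?_
  simp [← hu]

theorem hasDerivWithinAt_riccatiCoord [HasSummableGeomSeries R] {A : R} {Q : 𝕜 → R}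
    (hA : IsUnit A) (hQA : IsUnit (Q t + A))
    (hQ : HasDerivWithinAt Q (-Q t ^ 2 - A * Q t) s t) :
    HasDerivWithinAt (fun x => riccatiCoord A (Q x)) (-A * riccatiCoord A (Q t)) s t := by
  refine ((hasDerivWithinAt_ringInverse (hQ.add_const A) hQA).sub_const A⁻¹ʳ).congr_deriv ?_
  calc -((Q t + A)⁻¹ʳ * (-Q t ^ 2 - A * Q t) * (Q t + A)⁻¹ʳ)
      = (Q t + A)⁻¹ʳ * (Q t + A) * Q t * (Q t + A)⁻¹ʳ := by noncomm_ring
    _ = (Q t + A) * (Q t + A)⁻¹ʳ - A * (Q t + A)⁻¹ʳ := by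
      rw [Ring.inverse_mul_cancel _ hQA]
      noncomm_ring
    _ = A * A⁻¹ʳ - A * (Q t + A)⁻¹ʳ := by
      rw [Ring.mul_inverse_cancel _ hQA, Ring.mul_inverse_cancel _ hA]
    _ = -A * riccatiCoord A (Q t) := by
      rw [riccatiCoord]
      noncomm_ring

variable [StarRing 𝕜] [TrivialStar 𝕜] [StarRing R] [StarModule 𝕜 R] [ContinuousStar R]

theorem hasDerivWithinAt_star_mul_self_of_mem_skewAdjoint {A : R} {W : 𝕜 → R}
    (hA : A ∈ skewAdjoint R) (hW : HasDerivWithinAt W (A * W t) s t) :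
    HasDerivWithinAt (fun x => star (W x) * W x) 0 s t := by
  refine (hW.star.mul hW).congr_deriv ?_
  rw [star_mul, skewAdjoint.mem_iff.mp hA]
  noncomm_ring

end Riccati

theorem eq_of_hasDerivWithinAt_zero {E : Type*} [NormedAddCommGroup E] [NormedSpace ℝ E]
    {f : ℝ → E} {J : Set ℝ} (hJ : J.OrdConnected) (hf : ∀ t ∈ J, HasDerivWithinAt f 0 J t)
    {s t : ℝ} (hs : s ∈ J) (ht : t ∈ J) : f s = f t := by
  have hle : ‖f s - f t‖ ≤ 0 * ‖s - t‖ :=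
    hJ.convex.norm_image_sub_le_of_norm_hasDerivWithin_le hf (fun _ _ => norm_zero.le) ht hs
  rwa [zero_mul, norm_le_zero_iff, sub_eq_zero] at hle

theorem star_riccatiCoord_mul_self_eq {R : Type*} [NormedRing R] [NormedAlgebra ℝ R]
    [HasSummableGeomSeries R] [StarRing R] [StarModule ℝ R] [ContinuousStar R]
    {J : Set ℝ} (hJ : J.OrdConnected) {A : R} {Q : ℝ → R}
    (hA : IsUnit A) (hA_skew : A ∈ skewAdjoint R) (hQA : ∀ t ∈ J, IsUnit (Q t + A))
    (hQ : ∀ t ∈ J, HasDerivWithinAt Q (-Q t ^ 2 - A * Q t) J t)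
    {s t : ℝ} (hs : s ∈ J) (ht : t ∈ J) :
    star (riccatiCoord A (Q s)) * riccatiCoord A (Q s) =
      star (riccatiCoord A (Q t)) * riccatiCoord A (Q t) :=
  eq_of_hasDerivWithinAt_zero (f := fun x => star (riccatiCoord A (Q x)) * riccatiCoord A (Q x)) hJ
    (fun x hx => hasDerivWithinAt_star_mul_self_of_mem_skewAdjoint (neg_mem hA_skew)
      (hasDerivWithinAt_riccatiCoord hA (hQA x hx) (hQ x hx))) hs ht

section Coriolis

open Matrix

/-- The Coriolis matrix `l L`, with `L` the rotation by a right angle. -/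
def coriolisMatrix {𝕜 : Type*} [Ring 𝕜] (l : 𝕜) : Matrix (Fin 2) (Fin 2) 𝕜 :=
  !![0, -l; l, 0]

theorem isUnit_coriolisMatrix {𝕜 : Type*} [Field 𝕜] {l : 𝕜} (hl : l ≠ 0) :
    IsUnit (coriolisMatrix l) := by
  simp [isUnit_iff_isUnit_det, coriolisMatrix, hl]

theorem coriolisMatrix_mem_skewAdjoint {𝕜 : Type*} [Ring 𝕜] [StarRing 𝕜] [TrivialStar 𝕜] (l : 𝕜) :
    coriolisMatrix l ∈ skewAdjoint (Matrix (Fin 2) (Fin 2) 𝕜) := by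
  rw [skewAdjoint.mem_iff, star_eq_conjTranspose]
  ext i j
  fin_cases i <;> fin_cases j <;> simp [coriolisMatrix]

theorem det_add_coriolisMatrix {𝕜 : Type*} [CommRing 𝕜] (l a b c d : 𝕜) :
    (!![a, b; c, d] + coriolisMatrix l).det = a * d - (b - l) * (c + l) := by
  simp [coriolisMatrix, det_fin_two, sub_eq_add_neg]

theorem riccatiCoord_coriolisMatrix {𝕜 : Type*} [Field 𝕜] {l : 𝕜} (hl : l ≠ 0) (a b c d : 𝕜) :
    let δ := a * d - (b - l) * (c + l)
    riccatiCoord (coriolisMatrix l) !![a, b; c, d] =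
      !![d / δ, -((b - l) / δ + 1 / l); -((c + l) / δ - 1 / l), a / δ] := by
  intro δ
  have hinv_A : (coriolisMatrix l)⁻¹ʳ = !![0, 1 / l; -(1 / l), 0] := by
    rw [← nonsing_inv_eq_ringInverse]
    exact inv_eq_right_inv (by simp [coriolisMatrix, hl, one_fin_two])
  have hinv_QA : (!![a, b; c, d] + coriolisMatrix l)⁻¹ʳ =
      δ⁻¹ • !![d, -(b - l); -(c + l), a] := by
    rw [← nonsing_inv_eq_ringInverse, inv_def, det_add_coriolisMatrix, Ring.inverse_eq_inv',
      adjugate_fin_two]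
    simp [coriolisMatrix, δ, sub_eq_add_neg]
  rw [riccatiCoord, hinv_A, hinv_QA]
  ext i j
  fin_cases i <;> fin_cases j <;> simp [div_eq_inv_mul] <;> ring

/-- The Lyapunov function `V₁` at the velocity gradient `!![a, b; c, d]`, with
`δ = a d - (b - l) (c + l)` written out. It is the squared Frobenius norm of `riccatiCoord`. -/
noncomputable def lyapunov (l a b c d : ℝ) : ℝ :=
  (a ^ 2 + d ^ 2 + (b - l + (a * d - (b - l) * (c + l)) / l) ^ 2 +
      (c + l - (a * d - (b - l) * (c + l)) / l) ^ 2) /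
    (a * d - (b - l) * (c + l)) ^ 2

theorem trace_star_riccatiCoord_mul_self {l a b c d : ℝ} (hl : l ≠ 0)
    (hδ : a * d - (b - l) * (c + l) ≠ 0) :
    (star (riccatiCoord (coriolisMatrix l) !![a, b; c, d]) *
      riccatiCoord (coriolisMatrix l) !![a, b; c, d]).trace = lyapunov l a b c d := by
  rw [riccatiCoord_coriolisMatrix hl, lyapunov]
  generalize a * d - (b - l) * (c + l) = δ at hδ ⊢
  simp only [star_eq_conjTranspose, trace_fin_two, mul_apply, Fin.sum_univ_two,
    conjTranspose_apply, star_trivial, of_apply, cons_val', cons_val_zero, cons_val_one,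
    cons_val_fin_one]
  field_simp
  ring

open scoped Matrix.Norms.L2Operator

theorem hasDerivWithinAt_velocityGradient {l : ℝ} {a b c d : ℝ → ℝ} {J : Set ℝ} {t : ℝ}
    (ha : HasDerivWithinAt a (-(a t) ^ 2 - b t * c t + l * c t) J t)
    (hb : HasDerivWithinAt b (-(a t + d t) * b t + l * d t) J t)
    (hc : HasDerivWithinAt c (-(a t + d t) * c t - l * a t) J t)
    (hd : HasDerivWithinAt d (-(d t) ^ 2 - b t * c t - l * b t) J t) :
    HasDerivWithinAt (fun x => !![a x, b x; c x, d x])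
      (-!![a t, b t; c t, d t] ^ 2 - coriolisMatrix l * !![a t, b t; c t, d t]) J t := by
  have hfield : -!![a t, b t; c t, d t] ^ 2 - coriolisMatrix l * !![a t, b t; c t, d t] =
      !![-(a t) ^ 2 - b t * c t + l * c t, -(a t + d t) * b t + l * d t;
        -(a t + d t) * c t - l * a t, -(d t) ^ 2 - b t * c t - l * b t] := by
    ext i j
    fin_cases i <;> fin_cases j <;> simp [coriolisMatrix, sq] <;> ring
  rw [hfield]
  refine hasDerivWithinAt_pi.mpr fun i => hasDerivWithinAt_pi.mpr fun j => ?_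
  fin_cases i <;> fin_cases j
  exacts [ha, hb, hc, hd]

theorem stmt_11_general {l : ℝ} (hl : l ≠ 0) {J : Set ℝ} (hJ : J.OrdConnected)
    {a b c d : ℝ → ℝ}
    (hsol : ∀ t ∈ J,
      HasDerivWithinAt a (-(a t) ^ 2 - b t * c t + l * c t) J t ∧
      HasDerivWithinAt b (-(a t + d t) * b t + l * d t) J t ∧
      HasDerivWithinAt c (-(a t + d t) * c t - l * a t) J t ∧
      HasDerivWithinAt d (-(d t) ^ 2 - b t * c t - l * b t) J t)
    (hδ : ∀ t ∈ J, a t * d t - (b t - l) * (c t + l) ≠ 0)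
    {s t : ℝ} (hs : s ∈ J) (ht : t ∈ J) :
    lyapunov l (a s) (b s) (c s) (d s) = lyapunov l (a t) (b t) (c t) (d t) := by
  have hunit : ∀ x ∈ J, IsUnit (!![a x, b x; c x, d x] + coriolisMatrix l) := fun x hx => by
    rw [isUnit_iff_isUnit_det, det_add_coriolisMatrix]
    exact (hδ x hx).isUnit
  have hriccati : ∀ x ∈ J, HasDerivWithinAt (fun x => !![a x, b x; c x, d x])
      (-!![a x, b x; c x, d x] ^ 2 - coriolisMatrix l * !![a x, b x; c x, d x]) J x :=
    fun x hx =>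
      let ⟨ha, hb, hc, hd⟩ := hsol x hx
      hasDerivWithinAt_velocityGradient ha hb hc hd
  rw [← trace_star_riccatiCoord_mul_self hl (hδ s hs),
    ← trace_star_riccatiCoord_mul_self hl (hδ t ht),
    star_riccatiCoord_mul_self_eq hJ (isUnit_coriolisMatrix hl) (coriolisMatrix_mem_skewAdjoint l)
      hunit hriccati hs ht]

end Coriolis

/-- Along any solution of the system (Q)
`a' = −a² − bc + lc`, `b' = −(a+d)b + ld`, `c' = −(a+d)c − la`, `d' = −d² − bc − lb`
with `δ = ad − (b−l)(c+l) ≠ 0` on an interval `J`, the Lyapunov function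
`V₁ = [a² + d² + (b − l + δ/l)² + (c + l − δ/l)²] / δ²` is constant. -/
theorem stmt_11 (l : ℝ) (hl : l ≠ 0) (J : Set ℝ) (hJ : J.OrdConnected)
    (a b c d : ℝ → ℝ)
    (hsol : ∀ t ∈ J,
      HasDerivAt a (-(a t) ^ 2 - b t * c t + l * c t) t ∧
      HasDerivAt b (-(a t + d t) * b t + l * d t) t ∧
      HasDerivAt c (-(a t + d t) * c t - l * a t) t ∧
      HasDerivAt d (-(d t) ^ 2 - b t * c t - l * b t) t)
    (hδ : ∀ t ∈ J, a t * d t - (b t - l) * (c t + l) ≠ 0) :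
    ∀ s ∈ J, ∀ t ∈ J,
      ((a s) ^ 2 + (d s) ^ 2 +
          (b s - l + (a s * d s - (b s - l) * (c s + l)) / l) ^ 2 +
          (c s + l - (a s * d s - (b s - l) * (c s + l)) / l) ^ 2) /
        (a s * d s - (b s - l) * (c s + l)) ^ 2 =
      ((a t) ^ 2 + (d t) ^ 2 +
          (b t - l + (a t * d t - (b t - l) * (c t + l)) / l) ^ 2 +
          (c t + l - (a t * d t - (b t - l) * (c t + l)) / l) ^ 2) /
        (a t * d t - (b t - l) * (c t + l)) ^ 2 := by
  intro s hs t ht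
  exact stmt_11_general hl hJ (fun x hx => (hsol x hx).imp (·.hasDerivWithinAt)
    (.imp (·.hasDerivWithinAt) (.imp (·.hasDerivWithinAt) (·.hasDerivWithinAt)))) hδ hs ht
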